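/- arXiv:1602.08705 — 2 statements merged into one kernel-verified Lean document; each statement's English description precedes it below -/
import Mathlib

section
/- Let H be a connected filtered Hopf algebra over a field k of characteristic zero and A a commutative unital k-algebra. Every character φ ∈ G(H,A) is the convolution exponential of some infinitesimal character: there exists σ ∈ g(H,A) with φ = exp_⋆(σ) = Σ_{n≥0} σ^{⋆n}/n!. -/
open scoped TensorProduct
noncomputable section

variable (k : Type*) [Field k] {H : Type*} [Ring H] [HopfAlgebra k H]
variable {A : Type*} [CommRing A] [Algebra k A]

/-- The convolution product on `Hom(H, A)`: `f ⋆ g = m_A ∘ (f ⊗ g) ∘ Δ`. -/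
def convA (f g : H →ₗ[k] A) : H →ₗ[k] A :=
  LinearMap.mul' k A ∘ₗ TensorProduct.map f g ∘ₗ Coalgebra.comul

/-- Convolution powers `σ^{⋆n}`, with `σ^{⋆0} = 1_A ε`. -/
def convAPow (σ : H →ₗ[k] A) : ℕ → (H →ₗ[k] A)
  | 0 => Algebra.linearMap k A ∘ₗ Coalgebra.counit
  | n + 1 => convA k σ (convAPow σ n)

/-- A character: a linear map `φ : H → A` with `φ(1) = 1_A` and
`φ(xy) = φ(x)φ(y)`. -/
def IsCharacter (φ : H →ₗ[k] A) : Prop :=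
  φ 1 = 1 ∧ ∀ x y : H, φ (x * y) = φ x * φ y

/-- An infinitesimal character: `σ(xy) = σ(x)ε(y) + ε(x)σ(y)`. -/
def IsInfChar (σ : H →ₗ[k] A) : Prop :=
  ∀ x y : H,
    σ (x * y) =
      σ x * algebraMap k A (Coalgebra.counit y) +
        algebraMap k A (Coalgebra.counit x) * σ y


open Polynomial WithConv

theorem polynomial_eq_of_forall_eval_natCast_eq [CharZero k] {p q : A[X]}
    (h : ∀ m : ℕ, p.eval (m : A) = q.eval (m : A)) : p = q := by
  rw [← sub_eq_zero]
  set r := p - q with hr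
  have hr0 : ∀ m : ℕ, r.eval (m : A) = 0 := fun m => by simp [hr, h m]
  ext i
  rw [coeff_zero, ← Module.forall_dual_apply_eq_zero_iff k]
  intro f
  let s : k[X] := ∑ j ∈ Finset.range (r.natDegree + 1), monomial j (f (r.coeff j))
  have hs : s = 0 := by
    refine eq_of_infinite_eval_eq s 0
      ((Set.infinite_range_of_injective (Nat.cast_injective (R := k))).mono ?_)
    rintro _ ⟨m, rfl⟩
    have h1 := congrArg f (hr0 m)
    rw [eval_eq_sum_range, map_sum, map_zero] at h1
    simp only [Set.mem_ofPred_eq, eval_zero, s, eval_finsetSum, eval_monomial]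
    rw [← h1]
    refine Finset.sum_congr rfl fun j _ => ?_
    have : r.coeff j * (m : A) ^ j = ((m : k) ^ j) • r.coeff j := by
      rw [Algebra.smul_def, map_pow, map_natCast, mul_comm]
    rw [this, map_smul, smul_eq_mul, mul_comm]
  by_cases hi : i ≤ r.natDegree
  · have h2 : s.coeff i = 0 := by simp [hs]
    simpa [s, finsetSum_coeff, coeff_monomial, Nat.lt_succ_iff.2 hi, Nat.not_lt.2 hi,
      Nat.lt_succ_iff, hi] using h2
  · rw [coeff_eq_zero_of_natDegree_lt (not_le.1 hi), map_zero]

theorem exists_polynomial_eval_natCast_eq_choose [CharZero k] (j : ℕ) :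
    ∃ b : A[X], ∀ m : ℕ, b.eval (m : A) = (m.choose j : A) := by
  refine ⟨C (algebraMap k A (j.factorial : k)⁻¹) * descPochhammer A j, fun m => ?_⟩
  rw [eval_mul, eval_C, descPochhammer_eval_eq_descFactorial,
    Nat.descFactorial_eq_factorial_mul_choose, Nat.cast_mul, ← mul_assoc,
    ← map_natCast (algebraMap k A) j.factorial, ← map_mul,
    inv_mul_cancel₀ (Nat.cast_ne_zero.2 j.factorial_ne_zero), map_one, one_mul]

theorem convAPow_eq_pow (σ : H →ₗ[k] A) (n : ℕ) : convAPow k σ n = (toConv σ ^ n).ofConv := by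
  induction n with
  | zero => rfl
  | succ n ih => rw [pow_succ', convAPow, ih]; rfl

theorem isCharacter_convAPow {φ : H →ₗ[k] A} (hφ : IsCharacter k φ) (n : ℕ) :
    IsCharacter k (convAPow k φ n) := by
  let Φ : H →ₐ[k] A := AlgHom.ofLinearMap φ hφ.1 hφ.2
  have h : toConv ((toConv Φ ^ n).ofConv.toLinearMap) = toConv φ ^ n :=
    AlgHom.toLinearMap_convPow _ _
  rw [convAPow_eq_pow, ← h]
  exact ⟨map_one (toConv Φ ^ n).ofConv, map_mul (toConv Φ ^ n).ofConv⟩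

/-- Push an algebra-linear functional through a convolution. -/
theorem linearMap_convA_apply {B C : Type*} [CommRing B] [Algebra k B] [CommRing C] [Algebra k C]
    {f g : H →ₗ[k] B} {f' g' : H →ₗ[k] C} (L : B →ₗ[k] C)
    (h : ∀ x y, L (f x * g y) = f' x * g' y) (x : H) :
    L (convA k f g x) = convA k f' g' x := by
  simp only [convA, LinearMap.comp_apply]
  induction Coalgebra.comul (R := k) x using TensorProduct.induction_on with
  | zero => simp
  | tmul a b => simpa using h a b
  | add a b ha hb => simp only [map_add, ha, hb]

theorem convAPow_apply_eq_zero {F : ℕ → Submodule k H}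
    (hcomul : ∀ n : ℕ, ∀ x ∈ F n,
      Coalgebra.comul (R := k) x ∈
        (Finset.range (n + 1)).sup fun p =>
          LinearMap.range (TensorProduct.map (F p).subtype (F (n - p)).subtype))
    {ν : H →ₗ[k] A} (hν : ∀ x ∈ F 0, ν x = 0) {n : ℕ} :
    ∀ {m : ℕ}, m < n → ∀ x ∈ F m, convAPow k ν n x = 0 := by
  induction n with
  | zero => intro m hm; omega
  | succ n ih =>
    intro m hm x hx
    have hle : ((Finset.range (m + 1)).sup fun p =>
        LinearMap.range (TensorProduct.map (F p).subtype (F (m - p)).subtype)) ≤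
        LinearMap.ker (LinearMap.mul' k A ∘ₗ TensorProduct.map ν (convAPow k ν n)) := by
      refine Finset.sup_le fun p hp => ?_
      rw [LinearMap.range_le_ker_iff]
      ext a b
      simp only [TensorProduct.AlgebraTensorModule.curry_apply, LinearMap.restrictScalars_self,
        TensorProduct.curry_apply, LinearMap.comp_apply, TensorProduct.map_tmul,
        LinearMap.mul'_apply, Submodule.subtype_apply, LinearMap.zero_apply]
      rcases Nat.eq_zero_or_pos p with rfl | hp0
      · rw [hν _ a.2, zero_mul]
      · have := Finset.mem_range.1 hp
        rw [ih (by omega) _ b.2, mul_zero]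
    exact hle (hcomul m x hx)

theorem convAPow_eq_sum_choose (φ : H →ₗ[k] A) {m s : ℕ} (hs : m < s) (x : H) :
    convAPow k φ m x = ∑ j ∈ Finset.range s,
      (m.choose j : A) * convAPow k (φ - Algebra.linearMap k A ∘ₗ Coalgebra.counit) j x := by
  set ν := φ - Algebra.linearMap k A ∘ₗ Coalgebra.counit with hν
  have h : toConv φ = toConv ν + 1 := by
    ext x; simp [hν]
  have hpow : convAPow k φ m =
      ∑ j ∈ Finset.range (m + 1), m.choose j • convAPow k ν j := by
    simp only [convAPow_eq_pow]
    rw [h, (Commute.one_right _).add_pow, ofConv_sum]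
    refine Finset.sum_congr rfl fun j _ => ?_
    rw [one_pow, mul_one, ← nsmul_eq_mul']
    rfl
  rw [hpow, LinearMap.sum_apply]
  simp only [LinearMap.smul_apply, nsmul_eq_mul]
  refine Finset.sum_subset (Finset.range_subset_range.2 hs) fun j _ hj => ?_
  rw [Nat.choose_eq_zero_of_lt (Nat.lt_of_succ_le (by simpa using hj)), Nat.cast_zero,
    zero_mul]

theorem exists_polynomial_eval_natCast_eq_convAPow [CharZero k] {F : ℕ → Submodule k H}
    (hcomul : ∀ n : ℕ, ∀ x ∈ F n,
      Coalgebra.comul (R := k) x ∈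
        (Finset.range (n + 1)).sup fun p =>
          LinearMap.range (TensorProduct.map (F p).subtype (F (n - p)).subtype))
    (hconn : F 0 = Submodule.span k {(1 : H)})
    {φ : H →ₗ[k] A} (hφ : φ 1 = 1) {N : ℕ} {x : H} (hx : x ∈ F N) :
    ∃ p : A[X], ∀ m : ℕ, p.eval (m : A) = convAPow k φ m x := by
  set ν := φ - Algebra.linearMap k A ∘ₗ Coalgebra.counit with hν
  have hν0 : ∀ y ∈ F 0, ν y = 0 := by
    intro y hy
    rw [hconn, Submodule.mem_span_singleton] at hy
    obtain ⟨r, rfl⟩ := hy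
    simp [hν, hφ]
  choose b hb using exists_polynomial_eval_natCast_eq_choose k (A := A)
  refine ⟨∑ j ∈ Finset.range (N + 1), b j * C (convAPow k ν j x), fun m => ?_⟩
  rw [convAPow_eq_sum_choose k φ (show m < m + N + 1 by omega), eval_finsetSum]
  simp only [eval_mul, eval_C, hb]
  refine Finset.sum_subset (Finset.range_subset_range.2 (by omega)) fun j _ hj => ?_
  rw [convAPow_apply_eq_zero k hcomul hν0 (Nat.lt_of_succ_le (by simpa using hj)) x hx,
    mul_zero]

/-- If the convolution powers of `φ` are interpolated by polynomials, the interpolation is linear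
in the argument. -/
theorem exists_linearMap_eval_natCast_eq_convAPow [CharZero k] {φ : H →ₗ[k] A}
    (h : ∀ x, ∃ p : A[X], ∀ m : ℕ, p.eval (m : A) = convAPow k φ m x) :
    ∃ P : H →ₗ[k] A[X], ∀ (m : ℕ) (x : H), (P x).eval (m : A) = convAPow k φ m x := by
  choose P hP using h
  refine ⟨⟨⟨P, fun x y => ?_⟩, fun r x => ?_⟩, fun m x => hP x m⟩
  · refine polynomial_eq_of_forall_eval_natCast_eq k fun m => ?_
    rw [eval_add, hP, hP, hP, map_add]
  · refine polynomial_eq_of_forall_eval_natCast_eq k fun m => ?_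
    simp only [RingHom.id_apply, eval_smul, hP, map_smul]

section Interpolation

variable [CharZero k] {φ : H →ₗ[k] A} {P : H →ₗ[k] A[X]}

theorem taylor_eq_convA (hP : ∀ (m : ℕ) (x : H), (P x).eval (m : A) = convAPow k φ m x)
    (m : ℕ) (x : H) :
    taylor (m : A) (P x) =
      convA k P ((CAlgHom (R := k) (A := A)).toLinearMap ∘ₗ convAPow k φ m) x := by
  refine polynomial_eq_of_forall_eval_natCast_eq k fun n => ?_
  have h := linearMap_convA_apply k ((leval (n : A)).restrictScalars k) (f := P)
    (g := (CAlgHom (R := k) (A := A)).toLinearMap ∘ₗ convAPow k φ m)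
    (f' := convAPow k φ n) (g' := convAPow k φ m) (fun x y => by simp [hP]) x
  rw [LinearMap.restrictScalars_apply, leval_apply] at h
  rw [h, taylor_eval, ← Nat.cast_add, hP]
  simp only [convAPow_eq_pow, pow_add]
  rfl

theorem derivative_eq_convA (hP : ∀ (m : ℕ) (x : H), (P x).eval (m : A) = convAPow k φ m x)
    (x : H) :
    derivative (P x) = convA k ((CAlgHom (R := k) (A := A)).toLinearMap ∘ₗ
      ((lcoeff A 1).restrictScalars k ∘ₗ P)) P x := by
  refine polynomial_eq_of_forall_eval_natCast_eq k fun m => ?_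
  have h₁ := linearMap_convA_apply k ((lcoeff A 1).restrictScalars k) (f := P)
    (g := (CAlgHom (R := k) (A := A)).toLinearMap ∘ₗ convAPow k φ m)
    (f' := (lcoeff A 1).restrictScalars k ∘ₗ P) (g' := convAPow k φ m) (fun x y => by simp) x
  have h₂ := linearMap_convA_apply k ((leval (m : A)).restrictScalars k)
    (f := (CAlgHom (R := k) (A := A)).toLinearMap ∘ₗ ((lcoeff A 1).restrictScalars k ∘ₗ P))
    (g := P) (f' := (lcoeff A 1).restrictScalars k ∘ₗ P) (g' := convAPow k φ m)
    (fun x y => by simp [hP]) x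
  rw [LinearMap.restrictScalars_apply, leval_apply] at h₂
  rw [LinearMap.restrictScalars_apply, lcoeff_apply, ← taylor_eq_convA k hP,
    taylor_coeff_one] at h₁
  rw [h₁, h₂]

theorem coeff_eq_inv_factorial_smul_convAPow
    (hP : ∀ (m : ℕ) (x : H), (P x).eval (m : A) = convAPow k φ m x) (n : ℕ) :
    (lcoeff A n).restrictScalars k ∘ₗ P =
      (n.factorial : k)⁻¹ • convAPow k ((lcoeff A 1).restrictScalars k ∘ₗ P) n := by
  set σ := (lcoeff A 1).restrictScalars k ∘ₗ P with hσ
  induction n with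
  | zero =>
    ext x
    simpa [coeff_zero_eq_eval_zero, convAPow] using hP 0 x
  | succ n ih =>
    ext x
    have h := linearMap_convA_apply k ((lcoeff A n).restrictScalars k)
      (f := (CAlgHom (R := k) (A := A)).toLinearMap ∘ₗ σ) (g := P) (f' := σ)
      (g' := (lcoeff A n).restrictScalars k ∘ₗ P) (fun x y => by simp) x
    have hsmul : convA k σ ((n.factorial : k)⁻¹ • convAPow k σ n) =
        (n.factorial : k)⁻¹ • convAPow k σ (n + 1) := by
      simp [convA, convAPow, TensorProduct.map_smul_right, LinearMap.smul_comp,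
        LinearMap.comp_smul]
    rw [hσ, ← derivative_eq_convA k hP, ← hσ, ih, hsmul, LinearMap.restrictScalars_apply,
      lcoeff_apply, coeff_derivative] at h
    have hn : ((n + 1 : ℕ) : k) ≠ 0 := Nat.cast_ne_zero.2 n.succ_ne_zero
    have hA : (P x).coeff (n + 1) * ((n : A) + 1) = ((n + 1 : ℕ) : k) • (P x).coeff (n + 1) := by
      rw [Algebra.smul_def, map_natCast, Nat.cast_succ, mul_comm]
    rw [hA] at h
    rw [Nat.factorial_succ, Nat.cast_mul, mul_inv, mul_smul, LinearMap.smul_apply, ← h,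
      inv_smul_smul₀ hn]
    rfl

end Interpolation

/-- **Every character is a convolution exponential.**  Let `H` be a connected
filtered Hopf algebra over a field `k` of characteristic zero and `A` a
commutative unital `k`-algebra.  Every character `φ ∈ G(H,A)` is the
convolution exponential `exp_⋆(σ) = Σ_{n≥0} σ^{⋆n}/n!` (a pointwise finite sum)
of some infinitesimal character `σ ∈ g(H,A)`. -/
theorem character_is_exp_of_infinitesimal_character
    (k : Type*) [Field k] [CharZero k]
    (H : Type*) [Ring H] [HopfAlgebra k H]
    (A : Type*) [CommRing A] [Algebra k A]
    (F : ℕ → Submodule k H)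
    (hmono : Monotone F)
    (hexh : (⨆ n, F n) = ⊤)
    (hmul : ∀ p q : ℕ, ∀ x ∈ F p, ∀ y ∈ F q, x * y ∈ F (p + q))
    (hcomul : ∀ n : ℕ, ∀ x ∈ F n,
      Coalgebra.comul (R := k) x ∈
        (Finset.range (n + 1)).sup fun p =>
          LinearMap.range (TensorProduct.map (F p).subtype (F (n - p)).subtype))
    (hconn : F 0 = Submodule.span k {(1 : H)})
    (φ : H →ₗ[k] A) (hφ : IsCharacter k φ) :
    ∃ σ : H →ₗ[k] A,
      IsInfChar k σ ∧
      ∀ x : H, ∃ N : ℕ, ∀ n : ℕ, N ≤ n →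
        φ x = ∑ j ∈ Finset.range n, ((j.factorial : k)⁻¹ • convAPow k σ j) x := by
  obtain ⟨P, hP⟩ := exists_linearMap_eval_natCast_eq_convAPow k (φ := φ) fun x => by
    have hx : x ∈ ⨆ n, F n := hexh ▸ Submodule.mem_top
    obtain ⟨N, hN⟩ := (Submodule.mem_iSup_of_directed F hmono.directed_le).1 hx
    exact exists_polynomial_eval_natCast_eq_convAPow k hcomul hconn hφ.1 hN
  have hmulP (x y : H) : P (x * y) = P x * P y :=
    polynomial_eq_of_forall_eval_natCast_eq k fun m => by
      rw [eval_mul, hP, hP, hP, (isCharacter_convAPow k hφ m).2]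
  have hcoeff0 (x : H) : (P x).coeff 0 = algebraMap k A (Coalgebra.counit x) := by
    simpa [coeff_zero_eq_eval_zero, convAPow] using hP 0 x
  refine ⟨(lcoeff A 1).restrictScalars k ∘ₗ P, fun x y => ?_, fun x =>
    ⟨(P x).natDegree + 1, fun n hn => ?_⟩⟩
  · simp only [LinearMap.comp_apply, LinearMap.restrictScalars_apply, lcoeff_apply, hmulP,
      mul_coeff_one, hcoeff0]
    ring
  · have h1 := hP 1 x
    rw [convAPow_eq_pow, pow_one, ofConv_toConv, Nat.cast_one,
      eval_eq_sum_range' (Nat.lt_of_succ_le hn)] at h1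
    rw [← h1]
    refine Finset.sum_congr rfl fun j _ => ?_
    rw [← coeff_eq_inv_factorial_smul_convAPow k hP, one_pow, mul_one]
    rfl
end
end

section
/- Let k be a field of characteristic zero, Ω a set equipped with a commutative and associative binary operation Θ : Ω × Ω → Ω, and H_W the free k-vector space on words over Ω. The quasi-shuffle product ⧢_Θ, defined recursively by w ⧢_Θ ∅ = ∅ ⧢_Θ w = w and (au) ⧢_Θ (bv) = a(u ⧢_Θ bv) + b(au ⧢_Θ v) + Θ(a,b)(u ⧢_Θ v) for letters a,b and words u,v, together with the empty word ∅ as unit, the deconcatenation coproduct Δ(w) = Σ_{uv = w} v ⊗ u, and the counit δ_∅, makes H_W a commutative bialgebra, and hence (being connected filtered by word length) a Hopf algebra. -/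
open scoped TensorProduct
noncomputable section

variable (k : Type*) [Field k] {Ω : Type*}

/-- The vector space of words over the alphabet `Ω`: the free `k`-vector space
on the set of finite lists of letters. -/
abbrev HW (k : Type*) [Field k] (Ω : Type*) := List Ω →₀ k

/-- Quasi-shuffle product of two words:
`w ⧢_Θ ∅ = ∅ ⧢_Θ w = w` and
`(au) ⧢_Θ (bv) = a(u ⧢_Θ bv) + b(au ⧢_Θ v) + Θ(a,b)(u ⧢_Θ v)`. -/
def qshW (Θ : Ω → Ω → Ω) : List Ω → List Ω → HW k Ω
  | [], v => Finsupp.single v 1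
  | u, [] => Finsupp.single u 1
  | a :: u, b :: v =>
      Finsupp.mapDomain (a :: ·) (qshW Θ u (b :: v)) +
      Finsupp.mapDomain (b :: ·) (qshW Θ (a :: u) v) +
      Finsupp.mapDomain (Θ a b :: ·) (qshW Θ u v)
  termination_by u v => u.length + v.length

/-- Bilinear extension of the quasi-shuffle product to `HW k Ω`. -/
def qshL (Θ : Ω → Ω → Ω) : HW k Ω →ₗ[k] HW k Ω →ₗ[k] HW k Ω :=
  Finsupp.lift (HW k Ω →ₗ[k] HW k Ω) k (List Ω) fun u =>
    Finsupp.lift (HW k Ω) k (List Ω) fun v => qshW k Θ u v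

/-- Deconcatenation coproduct `Δ(w) = Σ_{uv = w} v ⊗ u`. -/
def deconcat : HW k Ω →ₗ[k] HW k Ω ⊗[k] HW k Ω :=
  Finsupp.lift (HW k Ω ⊗[k] HW k Ω) k (List Ω) fun w =>
    ∑ i ∈ Finset.range (w.length + 1),
      Finsupp.single (w.drop i) (1 : k) ⊗ₜ[k] Finsupp.single (w.take i) (1 : k)

/-- The counit `δ_∅`: indicator of the empty word. -/
def counitW : HW k Ω →ₗ[k] k :=
  Finsupp.lift k k (List Ω) fun w => match w with | [] => 1 | _ => 0

/-- The multiplication induced on `HW ⊗ HW` by the quasi-shuffle product: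
`(a ⊗ b)(c ⊗ d) = (a ⧢_Θ c) ⊗ (b ⧢_Θ d)`. -/
def mulHH (Θ : Ω → Ω → Ω) :
    (HW k Ω ⊗[k] HW k Ω) ⊗[k] (HW k Ω ⊗[k] HW k Ω) →ₗ[k] HW k Ω ⊗[k] HW k Ω :=
  (TensorProduct.map (TensorProduct.lift (qshL k Θ)) (TensorProduct.lift (qshL k Θ))) ∘ₗ
    (TensorProduct.tensorTensorTensorComm k (HW k Ω) (HW k Ω) (HW k Ω) (HW k Ω)).toLinearMap

/-- The filtration of `HW k Ω` by word length: span of words of length at most `n`. -/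
def filW (n : ℕ) : Submodule k (HW k Ω) :=
  Finsupp.supported k k {w : List Ω | w.length ≤ n}

variable {k}

/-- Linear maps out of `HW k Ω` which agree on words are equal. -/
theorem HW.linearMap_ext {M : Type*} [AddCommMonoid M] [Module k M] {f g : HW k Ω →ₗ[k] M}
    (h : ∀ u : List Ω, f (Finsupp.single u 1) = g (Finsupp.single u 1)) : f = g :=
  Finsupp.lhom_ext' fun u => LinearMap.ext_ring (h u)

variable (k)

/-- Prepending the letter `a` to every word, as a linear map. -/
def consW (a : Ω) : HW k Ω →ₗ[k] HW k Ω :=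
  Finsupp.lmapDomain k k (a :: ·)

variable {k}

theorem consW_single (a : Ω) (u : List Ω) (c : k) :
    consW k a (Finsupp.single u c) = Finsupp.single (a :: u) c := by
  simp [consW]

section Product

variable (Θ : Ω → Ω → Ω)

theorem qshL_single (u v : List Ω) :
    qshL k Θ (Finsupp.single u 1) (Finsupp.single v 1) = qshW k Θ u v := by
  simp [qshL]

theorem qshL_nil_left (x : HW k Ω) : qshL k Θ (Finsupp.single [] 1) x = x := by
  have h : qshL k Θ (Finsupp.single [] 1) = LinearMap.id :=
    HW.linearMap_ext fun u => by simp [qshL_single, qshW]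
  simp [h]

theorem qshL_nil_right (x : HW k Ω) : qshL k Θ x (Finsupp.single [] 1) = x := by
  have h : (qshL k Θ).flip (Finsupp.single [] 1) = LinearMap.id :=
    HW.linearMap_ext fun u => by cases u <;> simp [qshL_single, qshW]
  simpa using LinearMap.congr_fun h x

theorem qshL_consW (a b : Ω) (x y : HW k Ω) :
    qshL k Θ (consW k a x) (consW k b y) =
      consW k a (qshL k Θ x (consW k b y)) + consW k b (qshL k Θ (consW k a x) y) +
        consW k (Θ a b) (qshL k Θ x y) := by
  have h : (qshL k Θ).compl₁₂ (consW k a) (consW k b) =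
      ((qshL k Θ).compl₂ (consW k b)).compr₂ (consW k a) +
        ((qshL k Θ).comp (consW k a)).compr₂ (consW k b) +
          (qshL k Θ).compr₂ (consW k (Θ a b)) := by
    refine HW.linearMap_ext fun u => HW.linearMap_ext fun v => ?_
    simp only [LinearMap.compl₁₂_apply, LinearMap.add_apply, LinearMap.compr₂_apply,
      LinearMap.compl₂_apply, LinearMap.comp_apply, consW_single, qshL_single]
    rw [qshW]
    rfl
  exact LinearMap.congr_fun (LinearMap.congr_fun h x) y

theorem qshL_comm (hcomm : ∀ a b : Ω, Θ a b = Θ b a) (x y : HW k Ω) :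
    qshL k Θ x y = qshL k Θ y x := by
  have h : qshL k Θ = (qshL k Θ).flip := by
    refine HW.linearMap_ext fun u => HW.linearMap_ext fun v => ?_
    rw [LinearMap.flip_apply]
    induction u generalizing v with
    | nil => rw [qshL_nil_left, qshL_nil_right]
    | cons a u ihu =>
      induction v with
      | nil => rw [qshL_nil_left, qshL_nil_right]
      | cons b v ihv =>
        rw [← consW_single] at ihv
        simp only [← consW_single a, ← consW_single b]
        rw [qshL_consW, qshL_consW, ihv, ihu v, consW_single b, ihu (b :: v), hcomm a b]
        abel
  exact LinearMap.congr_fun (LinearMap.congr_fun h x) y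

theorem qshL_assoc (hassoc : ∀ a b c : Ω, Θ (Θ a b) c = Θ a (Θ b c)) (x y z : HW k Ω) :
    qshL k Θ (qshL k Θ x y) z = qshL k Θ x (qshL k Θ y z) := by
  have h : ∀ u v w : List Ω,
      qshL k Θ (qshL k Θ (Finsupp.single u 1) (Finsupp.single v 1)) (Finsupp.single w 1) =
        qshL k Θ (Finsupp.single u 1)
          (qshL k Θ (Finsupp.single v 1) (Finsupp.single w (1 : k))) := by
    intro u
    induction u with
    | nil => intro v w; simp only [qshL_nil_left]
    | cons a u ihu =>
      intro v
      induction v with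
      | nil => intro w; simp only [qshL_nil_left, qshL_nil_right]
      | cons b v ihv =>
        intro w
        induction w with
        | nil => simp only [qshL_nil_right]
        | cons c w ihw =>
          have h₁ := ihu (b :: v) (c :: w)
          have h₂ := ihu (b :: v) w
          have h₃ := ihu v (c :: w)
          have h₄ := ihu v w
          have h₅ := ihv (c :: w)
          have h₆ := ihv w
          simp only [← consW_single] at h₁ h₂ h₃ h₅ h₆ ihw ⊢
          simp only [qshL_consW, map_add, LinearMap.add_apply] at h₁ h₂ h₃ h₅ h₆ ihw ⊢
          rw [h₁, h₂, h₃, h₄, h₅, h₆, hassoc]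
          have h₇ := congrArg (consW k c) ihw
          simp only [map_add] at h₇ ⊢
          linear_combination (norm := abel) h₇
  have h₁ (v w : List Ω) :
      ((qshL k Θ).flip (Finsupp.single w 1)).comp ((qshL k Θ).flip (Finsupp.single v 1)) =
        (qshL k Θ).flip (qshL k Θ (Finsupp.single v 1) (Finsupp.single w (1 : k))) :=
    HW.linearMap_ext fun u => h u v w
  have h₂ (w : List Ω) :
      ((qshL k Θ).flip (Finsupp.single w 1)).comp (qshL k Θ x) =
        (qshL k Θ x).comp ((qshL k Θ).flip (Finsupp.single w 1)) :=
    HW.linearMap_ext fun v => LinearMap.congr_fun (h₁ v w) x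
  have h₃ : qshL k Θ (qshL k Θ x y) = (qshL k Θ x).comp (qshL k Θ y) :=
    HW.linearMap_ext fun w => LinearMap.congr_fun (h₂ w) y
  exact LinearMap.congr_fun h₃ z

end Product

section Coproduct

theorem deconcat_nil :
    deconcat k (Finsupp.single ([] : List Ω) (1 : k)) =
      Finsupp.single [] 1 ⊗ₜ[k] Finsupp.single [] 1 := by
  simp [deconcat]

theorem deconcat_single (w : List Ω) :
    deconcat k (Finsupp.single w (1 : k)) = ∑ i ∈ Finset.range (w.length + 1),
      Finsupp.single (w.drop i) (1 : k) ⊗ₜ[k] Finsupp.single (w.take i) (1 : k) := by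
  simp [deconcat]

theorem deconcat_consW (a : Ω) (x : HW k Ω) :
    deconcat k (consW k a x) =
      consW k a x ⊗ₜ[k] Finsupp.single [] 1 + (consW k a).lTensor (HW k Ω) (deconcat k x) := by
  have h : (deconcat k).comp (consW k a) =
      ((TensorProduct.mk k (HW k Ω) (HW k Ω)).flip (Finsupp.single [] 1)).comp (consW k a) +
        ((consW k a).lTensor (HW k Ω)).comp (deconcat k) := by
    refine HW.linearMap_ext fun u => ?_
    simp only [LinearMap.comp_apply, LinearMap.add_apply, consW_single, deconcat_single,
      LinearMap.flip_apply, TensorProduct.mk_apply, map_sum, LinearMap.lTensor_tmul]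
    rw [List.length_cons, Finset.sum_range_succ', add_comm]
    rfl
  exact LinearMap.congr_fun h x

theorem counitW_nil : counitW k (Finsupp.single ([] : List Ω) (1 : k)) = 1 := by
  simp [counitW]

theorem counitW_consW (a : Ω) (x : HW k Ω) : counitW k (consW k a x) = 0 := by
  have h : (counitW k).comp (consW k a) = (0 : HW k Ω →ₗ[k] k) :=
    HW.linearMap_ext fun u => by simp [consW_single, counitW]
  exact LinearMap.congr_fun h x

theorem counitW_qshL (Θ : Ω → Ω → Ω) (x y : HW k Ω) :
    counitW k (qshL k Θ x y) = counitW k x * counitW k y := by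
  have h : (qshL k Θ).compr₂ (counitW k) =
      (LinearMap.mul k k).compl₁₂ (counitW k) (counitW k) := by
    refine HW.linearMap_ext fun u => HW.linearMap_ext fun v => ?_
    simp only [LinearMap.compr₂_apply, LinearMap.compl₁₂_apply, LinearMap.mul_apply']
    cases u with
    | nil => rw [qshL_nil_left, counitW_nil, one_mul]
    | cons a u =>
      cases v with
      | nil => rw [qshL_nil_right, counitW_nil, mul_one]
      | cons b v =>
        simp only [← consW_single, qshL_consW, map_add, counitW_consW, add_zero, mul_zero]
  exact LinearMap.congr_fun (LinearMap.congr_fun h x) y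

theorem deconcat_coassoc (x : HW k Ω) :
    (TensorProduct.assoc k (HW k Ω) (HW k Ω) (HW k Ω))
        ((deconcat k).rTensor (HW k Ω) (deconcat k x)) =
      (deconcat k).lTensor (HW k Ω) (deconcat k x) := by
  have hr (a : Ω) (t : HW k Ω ⊗[k] HW k Ω) :
      (TensorProduct.assoc k (HW k Ω) (HW k Ω) (HW k Ω))
          ((deconcat k).rTensor (HW k Ω) ((consW k a).lTensor (HW k Ω) t)) =
        ((consW k a).lTensor (HW k Ω)).lTensor (HW k Ω)
          ((TensorProduct.assoc k (HW k Ω) (HW k Ω) (HW k Ω))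
            ((deconcat k).rTensor (HW k Ω) t)) := by
    induction t with
    | zero => simp only [map_zero]
    | add s t hs ht => simp only [map_add, hs, ht]
    | tmul x y =>
      simp only [LinearMap.lTensor_tmul, LinearMap.rTensor_tmul]
      generalize deconcat k x = s
      induction s with
      | zero => simp only [map_zero, TensorProduct.zero_tmul]
      | add s t hs ht => simp only [map_add, TensorProduct.add_tmul, hs, ht]
      | tmul x z => simp only [TensorProduct.assoc_tmul, LinearMap.lTensor_tmul]
  have hl (a : Ω) (t : HW k Ω ⊗[k] HW k Ω) :
      (deconcat k).lTensor (HW k Ω) ((consW k a).lTensor (HW k Ω) t) =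
        (TensorProduct.assoc k (HW k Ω) (HW k Ω) (HW k Ω))
            ((consW k a).lTensor (HW k Ω) t ⊗ₜ[k] Finsupp.single [] 1) +
          ((consW k a).lTensor (HW k Ω)).lTensor (HW k Ω)
            ((deconcat k).lTensor (HW k Ω) t) := by
    induction t with
    | zero => simp only [map_zero, TensorProduct.zero_tmul, add_zero]
    | add s t hs ht => simp only [map_add, TensorProduct.add_tmul, hs, ht]; abel
    | tmul x y =>
      simp only [LinearMap.lTensor_tmul, deconcat_consW, TensorProduct.tmul_add,
        TensorProduct.assoc_tmul]
  have h : ((TensorProduct.assoc k (HW k Ω) (HW k Ω) (HW k Ω)).toLinearMap.comp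
      ((deconcat k).rTensor (HW k Ω))).comp (deconcat k) =
        ((deconcat k).lTensor (HW k Ω)).comp (deconcat k) := by
    refine HW.linearMap_ext fun u => ?_
    simp only [LinearMap.comp_apply, LinearEquiv.coe_coe]
    induction u with
    | nil =>
      simp only [deconcat_nil, LinearMap.rTensor_tmul, LinearMap.lTensor_tmul,
        TensorProduct.assoc_tmul]
    | cons a u ih =>
      rw [← consW_single, deconcat_consW, map_add, map_add, map_add, hr, hl, ih,
        LinearMap.rTensor_tmul, LinearMap.lTensor_tmul, deconcat_consW, deconcat_nil,
        TensorProduct.add_tmul, map_add, TensorProduct.assoc_tmul, add_assoc]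
  exact LinearMap.congr_fun h x

theorem lid_counitW_rTensor_deconcat (x : HW k Ω) :
    TensorProduct.lid k (HW k Ω) ((counitW k).rTensor (HW k Ω) (deconcat k x)) = x := by
  have hr (a : Ω) (t : HW k Ω ⊗[k] HW k Ω) :
      TensorProduct.lid k (HW k Ω)
          ((counitW k).rTensor (HW k Ω) ((consW k a).lTensor (HW k Ω) t)) =
        consW k a (TensorProduct.lid k (HW k Ω) ((counitW k).rTensor (HW k Ω) t)) := by
    induction t with
    | zero => simp only [map_zero]
    | add s t hs ht => simp only [map_add, hs, ht]
    | tmul x y =>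
      simp only [LinearMap.lTensor_tmul, LinearMap.rTensor_tmul, TensorProduct.lid_tmul, map_smul]
  have h : ((TensorProduct.lid k (HW k Ω)).toLinearMap.comp
      ((counitW k).rTensor (HW k Ω))).comp (deconcat k) = LinearMap.id := by
    refine HW.linearMap_ext fun u => ?_
    simp only [LinearMap.comp_apply, LinearEquiv.coe_coe, LinearMap.id_apply]
    induction u with
    | nil =>
      rw [deconcat_nil, LinearMap.rTensor_tmul, TensorProduct.lid_tmul, counitW_nil, one_smul]
    | cons a u ih =>
      rw [← consW_single, deconcat_consW, map_add, map_add, hr, ih, LinearMap.rTensor_tmul,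
        counitW_consW, TensorProduct.zero_tmul, map_zero, zero_add]
  exact LinearMap.congr_fun h x

theorem rid_counitW_lTensor_deconcat (x : HW k Ω) :
    TensorProduct.rid k (HW k Ω) ((counitW k).lTensor (HW k Ω) (deconcat k x)) = x := by
  have hl (a : Ω) (t : HW k Ω ⊗[k] HW k Ω) :
      (counitW k).lTensor (HW k Ω) ((consW k a).lTensor (HW k Ω) t) = 0 := by
    induction t with
    | zero => simp only [map_zero]
    | add s t hs ht => simp only [map_add, hs, ht, add_zero]
    | tmul x y =>
      simp only [LinearMap.lTensor_tmul, counitW_consW, TensorProduct.tmul_zero]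
  have h : ((TensorProduct.rid k (HW k Ω)).toLinearMap.comp
      ((counitW k).lTensor (HW k Ω))).comp (deconcat k) = LinearMap.id := by
    refine HW.linearMap_ext fun u => ?_
    simp only [LinearMap.comp_apply, LinearEquiv.coe_coe, LinearMap.id_apply]
    cases u with
    | nil =>
      rw [deconcat_nil, LinearMap.lTensor_tmul, TensorProduct.rid_tmul, counitW_nil, one_smul]
    | cons a u =>
      rw [← consW_single, deconcat_consW, map_add, hl, LinearMap.lTensor_tmul, counitW_nil,
        add_zero, TensorProduct.rid_tmul, one_smul]
  exact LinearMap.congr_fun h x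

end Coproduct

section Bialgebra

variable (Θ : Ω → Ω → Ω)

theorem mulHH_tmul (x y z t : HW k Ω) :
    mulHH k Θ ((x ⊗ₜ[k] y) ⊗ₜ[k] (z ⊗ₜ[k] t)) = qshL k Θ x z ⊗ₜ[k] qshL k Θ y t := by
  simp [mulHH]

theorem mulHH_one_left (t : HW k Ω ⊗[k] HW k Ω) :
    mulHH k Θ ((Finsupp.single [] 1 ⊗ₜ[k] Finsupp.single [] 1) ⊗ₜ[k] t) = t := by
  induction t with
  | zero => rw [TensorProduct.tmul_zero, map_zero]
  | add s t hs ht => rw [TensorProduct.tmul_add, map_add, hs, ht]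
  | tmul x y => rw [mulHH_tmul, qshL_nil_left, qshL_nil_left]

theorem mulHH_one_right (t : HW k Ω ⊗[k] HW k Ω) :
    mulHH k Θ (t ⊗ₜ[k] (Finsupp.single [] 1 ⊗ₜ[k] Finsupp.single [] 1)) = t := by
  induction t with
  | zero => rw [TensorProduct.zero_tmul, map_zero]
  | add s t hs ht => rw [TensorProduct.add_tmul, map_add, hs, ht]
  | tmul x y => rw [mulHH_tmul, qshL_nil_right, qshL_nil_right]

theorem mulHH_tmul_nil_lTensor_consW (b : Ω) (x : HW k Ω) (t : HW k Ω ⊗[k] HW k Ω) :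
    mulHH k Θ ((x ⊗ₜ[k] Finsupp.single [] 1) ⊗ₜ[k] (consW k b).lTensor (HW k Ω) t) =
      (consW k b).lTensor (HW k Ω) (mulHH k Θ ((x ⊗ₜ[k] Finsupp.single [] 1) ⊗ₜ[k] t)) := by
  induction t with
  | zero => simp only [TensorProduct.tmul_zero, map_zero]
  | add s t hs ht => simp only [TensorProduct.tmul_add, map_add, hs, ht]
  | tmul y z => simp only [LinearMap.lTensor_tmul, mulHH_tmul, qshL_nil_left]

theorem mulHH_lTensor_consW_tmul_nil (a : Ω) (y : HW k Ω) (s : HW k Ω ⊗[k] HW k Ω) :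
    mulHH k Θ ((consW k a).lTensor (HW k Ω) s ⊗ₜ[k] (y ⊗ₜ[k] Finsupp.single [] 1)) =
      (consW k a).lTensor (HW k Ω) (mulHH k Θ (s ⊗ₜ[k] (y ⊗ₜ[k] Finsupp.single [] 1))) := by
  induction s with
  | zero => simp only [TensorProduct.zero_tmul, map_zero]
  | add s t hs ht => simp only [TensorProduct.add_tmul, map_add, hs, ht]
  | tmul x z => simp only [LinearMap.lTensor_tmul, mulHH_tmul, qshL_nil_right]

theorem mulHH_lTensor_consW (a b : Ω) (s t : HW k Ω ⊗[k] HW k Ω) :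
    mulHH k Θ ((consW k a).lTensor (HW k Ω) s ⊗ₜ[k] (consW k b).lTensor (HW k Ω) t) =
      (consW k a).lTensor (HW k Ω) (mulHH k Θ (s ⊗ₜ[k] (consW k b).lTensor (HW k Ω) t)) +
        (consW k b).lTensor (HW k Ω) (mulHH k Θ ((consW k a).lTensor (HW k Ω) s ⊗ₜ[k] t)) +
          (consW k (Θ a b)).lTensor (HW k Ω) (mulHH k Θ (s ⊗ₜ[k] t)) := by
  induction s with
  | zero => simp only [TensorProduct.zero_tmul, map_zero, add_zero]
  | add s s' hs hs' =>
    simp only [TensorProduct.add_tmul, map_add, hs, hs']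
    abel
  | tmul x y =>
    induction t with
    | zero => simp only [TensorProduct.tmul_zero, map_zero, add_zero]
    | add t t' ht ht' =>
      simp only [TensorProduct.tmul_add, map_add, ht, ht']
      abel
    | tmul z w =>
      simp only [LinearMap.lTensor_tmul, mulHH_tmul, qshL_consW, TensorProduct.tmul_add]

theorem deconcat_qshL (x y : HW k Ω) :
    deconcat k (qshL k Θ x y) = mulHH k Θ (deconcat k x ⊗ₜ[k] deconcat k y) := by
  have h : (qshL k Θ).compr₂ (deconcat k) =
      ((TensorProduct.mk k (HW k Ω ⊗[k] HW k Ω) (HW k Ω ⊗[k] HW k Ω)).compl₁₂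
        (deconcat k) (deconcat k)).compr₂ (mulHH k Θ) := by
    refine HW.linearMap_ext fun u => HW.linearMap_ext fun v => ?_
    simp only [LinearMap.compr₂_apply, LinearMap.compl₁₂_apply, TensorProduct.mk_apply]
    induction u generalizing v with
    | nil => rw [qshL_nil_left, deconcat_nil, mulHH_one_left]
    | cons a u ihu =>
      induction v with
      | nil => rw [qshL_nil_right, deconcat_nil, mulHH_one_right]
      | cons b v ihv =>
        have h₁ := ihu (b :: v)
        have h₂ := ihu v
        simp only [← consW_single] at h₁ ihv ⊢
        rw [qshL_consW]
        simp only [map_add, deconcat_consW (k := k) (Ω := Ω) _ (qshL k Θ _ _)]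
        rw [h₁, h₂, ihv]
        simp only [deconcat_consW, TensorProduct.add_tmul, TensorProduct.tmul_add, map_add,
          mulHH_lTensor_consW, mulHH_tmul_nil_lTensor_consW, mulHH_lTensor_consW_tmul_nil,
          mulHH_tmul, qshL_consW, qshL_nil_left]
        abel
  exact LinearMap.congr_fun (LinearMap.congr_fun h x) y

end Bialgebra

section Filtration

theorem filW_eq_span (n : ℕ) :
    filW k (Ω := Ω) n =
      Submodule.span k ((fun w => Finsupp.single w 1) '' {w : List Ω | w.length ≤ n}) :=
  Finsupp.supported_eq_span_single k _

theorem single_mem_filW {w : List Ω} {n : ℕ} (h : w.length ≤ n) :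
    Finsupp.single w (1 : k) ∈ filW k n :=
  Finsupp.single_mem_supported k 1 h

theorem filW_le_iff {n : ℕ} {p : Submodule k (HW k Ω)} :
    filW k n ≤ p ↔ ∀ w : List Ω, w.length ≤ n → Finsupp.single w 1 ∈ p := by
  rw [filW_eq_span, Submodule.span_le, Set.image_subset_iff]
  rfl

theorem filW_mono : Monotone (filW k (Ω := Ω)) := fun _ _ h =>
  filW_le_iff.2 fun _ hw => single_mem_filW (hw.trans h)

theorem iSup_filW : (⨆ n, filW k (Ω := Ω) n) = ⊤ := by
  refine eq_top_iff.2 fun x _ => Submodule.mem_iSup_of_mem (x.support.sup List.length) ?_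
  exact (Finsupp.mem_supported k x).2 fun w hw => Finset.le_sup (f := List.length) hw

theorem filW_zero : filW k (Ω := Ω) 0 = Submodule.span k {Finsupp.single [] 1} := by
  rw [filW_eq_span]
  congr 1
  ext x
  simp

theorem consW_mem_filW (a : Ω) {n : ℕ} {x : HW k Ω} (hx : x ∈ filW k n) :
    consW k a x ∈ filW k (n + 1) := by
  have h : filW k n ≤ (filW k (n + 1)).comap (consW k a) :=
    filW_le_iff.2 fun w hw => by
      rw [Submodule.mem_comap, consW_single]
      exact single_mem_filW (Nat.succ_le_succ hw)
  exact h hx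

theorem qshW_mem_filW (Θ : Ω → Ω → Ω) (u v : List Ω) :
    qshW k Θ u v ∈ filW k (u.length + v.length) := by
  rw [← qshL_single]
  induction u generalizing v with
  | nil =>
    rw [qshL_nil_left]
    exact single_mem_filW (by simp)
  | cons a u ihu =>
    induction v with
    | nil =>
      rw [qshL_nil_right]
      exact single_mem_filW (by simp)
    | cons b v ihv =>
      have h₁ := consW_mem_filW a (ihu (b :: v))
      have h₂ := consW_mem_filW b ihv
      have h₃ := consW_mem_filW (Θ a b) (ihu v)
      simp only [← consW_single a, ← consW_single b] at h₁ h₂ ⊢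
      rw [qshL_consW]
      refine add_mem (add_mem (filW_mono ?_ h₁) (filW_mono ?_ h₂)) (filW_mono ?_ h₃) <;>
        simp only [List.length_cons] <;> omega

theorem qshL_mem_filW (Θ : Ω → Ω → Ω) {p q : ℕ} {x y : HW k Ω} (hx : x ∈ filW k p)
    (hy : y ∈ filW k q) : qshL k Θ x y ∈ filW k (p + q) := by
  have h₁ (u : List Ω) (hu : u.length ≤ p) :
      filW k q ≤ (filW k (p + q)).comap (qshL k Θ (Finsupp.single u 1)) :=
    filW_le_iff.2 fun v hv => by
      rw [Submodule.mem_comap, qshL_single]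
      exact filW_mono (add_le_add hu hv) (qshW_mem_filW Θ u v)
  have h₂ : filW k p ≤ (filW k (p + q)).comap ((qshL k Θ).flip y) :=
    filW_le_iff.2 fun u hu => h₁ u hu hy
  exact h₂ hx

theorem deconcat_mem_filW {n : ℕ} {x : HW k Ω} (hx : x ∈ filW k n) :
    deconcat k x ∈ (Finset.range (n + 1)).sup fun p =>
      LinearMap.range
        (TensorProduct.map (filW k (Ω := Ω) p).subtype (filW k (Ω := Ω) (n - p)).subtype) := by
  refine (filW_le_iff (p := Submodule.comap (deconcat k) _)).2 (fun w hw => ?_) hx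
  rw [Submodule.mem_comap, deconcat_single]
  refine Submodule.sum_mem _ fun i hi => ?_
  rw [Finset.mem_range] at hi
  refine Finset.le_sup (f := fun p => LinearMap.range
    (TensorProduct.map (filW k (Ω := Ω) p).subtype (filW k (Ω := Ω) (n - p)).subtype))
    (Finset.mem_range.2 (show n - i < n + 1 by omega)) ?_
  have hd : Finsupp.single (w.drop i) (1 : k) ∈ filW k (n - i) :=
    single_mem_filW (by rw [List.length_drop]; omega)
  have ht : Finsupp.single (w.take i) (1 : k) ∈ filW k (n - (n - i)) :=
    single_mem_filW (by rw [List.length_take]; omega)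
  exact ⟨⟨_, hd⟩ ⊗ₜ ⟨_, ht⟩, by simp⟩

end Filtration

section Antipode

variable (Θ : Ω → Ω → Ω)

/-- The convolution product of two linear endomorphisms of `HW k Ω`. -/
def convW (f g : HW k Ω →ₗ[k] HW k Ω) : HW k Ω →ₗ[k] HW k Ω :=
  (TensorProduct.lift (qshL k Θ) ∘ₗ TensorProduct.map f g) ∘ₗ deconcat k

/-- The neutral element `x ↦ δ_∅(x) ∅` of the convolution product. -/
def unitCounitW : HW k Ω →ₗ[k] HW k Ω :=
  (counitW k).smulRight (Finsupp.single [] 1)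

variable {Θ}

theorem convW_assoc (hassoc : ∀ a b c : Ω, Θ (Θ a b) c = Θ a (Θ b c))
    (f g h : HW k Ω →ₗ[k] HW k Ω) :
    convW Θ (convW Θ f g) h = convW Θ f (convW Θ g h) := by
  have hf (t : (HW k Ω ⊗[k] HW k Ω) ⊗[k] HW k Ω) :
      TensorProduct.lift (qshL k Θ) (TensorProduct.map
          (TensorProduct.lift (qshL k Θ) ∘ₗ TensorProduct.map f g) h t) =
        TensorProduct.lift (qshL k Θ) (TensorProduct.map f
          (TensorProduct.lift (qshL k Θ) ∘ₗ TensorProduct.map g h)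
            (TensorProduct.assoc k (HW k Ω) (HW k Ω) (HW k Ω) t)) := by
    induction t with
    | zero => simp only [map_zero]
    | add s t hs ht => simp only [map_add, hs, ht]
    | tmul t z =>
      induction t with
      | zero => simp only [TensorProduct.zero_tmul, map_zero]
      | add s t hs ht => simp only [TensorProduct.add_tmul, map_add, hs, ht]
      | tmul x y =>
        simp only [TensorProduct.assoc_tmul, TensorProduct.map_tmul, LinearMap.comp_apply,
          TensorProduct.lift.tmul, qshL_assoc Θ hassoc]
  refine LinearMap.ext fun x => ?_
  simp only [convW, ← LinearMap.map_comp_rTensor, ← LinearMap.map_comp_lTensor,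
    LinearMap.comp_apply] at hf ⊢
  rw [← deconcat_coassoc, ← hf]

theorem convW_unitCounitW (f : HW k Ω →ₗ[k] HW k Ω) :
    convW Θ f unitCounitW = f := by
  have h (t : HW k Ω ⊗[k] HW k Ω) :
      TensorProduct.lift (qshL k Θ) (TensorProduct.map f unitCounitW t) =
        f (TensorProduct.rid k (HW k Ω) ((counitW k).lTensor (HW k Ω) t)) := by
    induction t with
    | zero => simp only [map_zero]
    | add s t hs ht => simp only [map_add, hs, ht]
    | tmul x y =>
      simp only [unitCounitW, TensorProduct.map_tmul, TensorProduct.lift.tmul,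
        LinearMap.smulRight_apply, map_smul, qshL_nil_right, LinearMap.lTensor_tmul,
        TensorProduct.rid_tmul]
  refine LinearMap.ext fun x => ?_
  rw [convW, LinearMap.comp_apply, LinearMap.comp_apply, h, rid_counitW_lTensor_deconcat]

theorem unitCounitW_convW (f : HW k Ω →ₗ[k] HW k Ω) :
    convW Θ unitCounitW f = f := by
  have h (t : HW k Ω ⊗[k] HW k Ω) :
      TensorProduct.lift (qshL k Θ) (TensorProduct.map unitCounitW f t) =
        f (TensorProduct.lid k (HW k Ω) ((counitW k).rTensor (HW k Ω) t)) := by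
    induction t with
    | zero => simp only [map_zero]
    | add s t hs ht => simp only [map_add, hs, ht]
    | tmul x y =>
      simp only [unitCounitW, TensorProduct.map_tmul, TensorProduct.lift.tmul,
        LinearMap.smulRight_apply, map_smul, LinearMap.smul_apply, qshL_nil_left,
        LinearMap.rTensor_tmul, TensorProduct.lid_tmul]
  refine LinearMap.ext fun x => ?_
  rw [convW, LinearMap.comp_apply, LinearMap.comp_apply, h, lid_counitW_rTensor_deconcat]

variable (Θ) in
/-- The values on words of the left convolution inverse of an endomorphism `f` of `HW k Ω`
fixing the empty word. -/
def convInvW (f : HW k Ω →ₗ[k] HW k Ω) : List Ω → HW k Ω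
  | [] => Finsupp.single [] 1
  | a :: w => -∑ i : Fin (w.length + 1),
      qshL k Θ (convInvW f (w.drop i)) (f (Finsupp.single (a :: w.take i) 1))
  termination_by w => w.length
  decreasing_by simp only [List.length_drop, List.length_cons]; omega

theorem exists_convW_eq_unitCounitW {f : HW k Ω →ₗ[k] HW k Ω}
    (hf : f (Finsupp.single [] 1) = Finsupp.single [] 1) :
    ∃ g : HW k Ω →ₗ[k] HW k Ω, g (Finsupp.single [] 1) = Finsupp.single [] 1 ∧
      convW Θ g f = unitCounitW := by
  set g : HW k Ω →ₗ[k] HW k Ω := Finsupp.lift (HW k Ω) k (List Ω) (convInvW Θ f) with hg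
  have hgs (w : List Ω) : g (Finsupp.single w 1) = convInvW Θ f w := by simp [hg]
  have hg₀ : g (Finsupp.single [] 1) = Finsupp.single [] 1 := by rw [hgs, convInvW]
  refine ⟨g, hg₀, HW.linearMap_ext fun w => ?_⟩
  simp only [convW, unitCounitW, LinearMap.comp_apply, LinearMap.smulRight_apply]
  cases w with
  | nil =>
    rw [deconcat_nil, TensorProduct.map_tmul, TensorProduct.lift.tmul, hg₀, hf,
      qshL_nil_left, counitW_nil, one_smul]
  | cons a w =>
    rw [← consW_single, deconcat_consW, counitW_consW, zero_smul, map_add, map_add,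
      TensorProduct.map_tmul, TensorProduct.lift.tmul, hf, qshL_nil_right, consW_single, hgs,
      convInvW, neg_add_eq_zero, deconcat_single, Finset.sum_range]
    simp only [map_sum, LinearMap.lTensor_tmul, TensorProduct.map_tmul, TensorProduct.lift.tmul,
      consW_single, hgs]

theorem exists_antipodeW (hassoc : ∀ a b c : Ω, Θ (Θ a b) c = Θ a (Θ b c)) :
    ∃ S : HW k Ω →ₗ[k] HW k Ω,
      convW Θ S LinearMap.id = unitCounitW ∧ convW Θ LinearMap.id S = unitCounitW := by
  obtain ⟨S, hS₀, hS⟩ :=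
    exists_convW_eq_unitCounitW (Θ := Θ) (f := (LinearMap.id : HW k Ω →ₗ[k] HW k Ω)) rfl
  obtain ⟨T, -, hT⟩ := exists_convW_eq_unitCounitW (Θ := Θ) hS₀
  have hTid : T = LinearMap.id := by
    rw [← convW_unitCounitW (Θ := Θ) T, ← hS, ← convW_assoc hassoc, hT, unitCounitW_convW]
  exact ⟨S, hS, hTid ▸ hT⟩

end Antipode

variable (k)

/-- **The quasi-shuffle Hopf algebra of words.**  Over a field `k` of characteristic
zero, given a commutative and associative operation `Θ` on the alphabet `Ω`, the
free vector space on words over `Ω` endowed with the quasi-shuffle product `⧢_Θ`,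
the empty word as unit, the deconcatenation coproduct and the counit `δ_∅` is a
commutative bialgebra, which is connected filtered by word length, and hence a
Hopf algebra (there is an antipode `S_Θ`). -/
theorem quasi_shuffle_words_bialgebra_connected_filtered_hopf
    (k : Type*) [Field k] [CharZero k] (Ω : Type*) (Θ : Ω → Ω → Ω)
    (hcomm : ∀ a b : Ω, Θ a b = Θ b a)
    (hassoc : ∀ a b c : Ω, Θ (Θ a b) c = Θ a (Θ b c)) :
    -- commutativity
    (∀ x y : HW k Ω, qshL k Θ x y = qshL k Θ y x) ∧
    -- associativity
    (∀ x y z : HW k Ω, qshL k Θ (qshL k Θ x y) z = qshL k Θ x (qshL k Θ y z)) ∧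
    -- the empty word is a unit
    (∀ x : HW k Ω, qshL k Θ (Finsupp.single [] 1) x = x ∧
      qshL k Θ x (Finsupp.single [] 1) = x) ∧
    -- coassociativity of deconcatenation
    (∀ x : HW k Ω,
      (TensorProduct.assoc k (HW k Ω) (HW k Ω) (HW k Ω))
          ((deconcat k).rTensor (HW k Ω) (deconcat k x)) =
        (deconcat k).lTensor (HW k Ω) (deconcat k x)) ∧
    -- counitality
    (∀ x : HW k Ω,
      (TensorProduct.lid k (HW k Ω)) ((counitW k).rTensor (HW k Ω) (deconcat k x)) = x ∧
      (TensorProduct.rid k (HW k Ω)) ((counitW k).lTensor (HW k Ω) (deconcat k x)) = x) ∧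
    -- the coproduct is an algebra morphism for the quasi-shuffle product
    (deconcat k (Finsupp.single ([] : List Ω) (1 : k)) =
        Finsupp.single [] 1 ⊗ₜ[k] Finsupp.single [] 1) ∧
    (∀ x y : HW k Ω,
      deconcat k (qshL k Θ x y) = mulHH k Θ (deconcat k x ⊗ₜ[k] deconcat k y)) ∧
    -- the counit is an algebra morphism
    (counitW k (Finsupp.single ([] : List Ω) (1 : k)) = 1) ∧
    (∀ x y : HW k Ω, counitW k (qshL k Θ x y) = counitW k x * counitW k y) ∧
    -- connected filtered by word length: the filtration is increasing and exhaustive, …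
    Monotone (filW k (Ω := Ω)) ∧ (⨆ n, filW k (Ω := Ω) n) = ⊤ ∧
    -- … the quasi-shuffle of words of lengths `≤ p` and `≤ q` has length `≤ p + q`, …
    (∀ p q : ℕ, ∀ x ∈ filW k (Ω := Ω) p, ∀ y ∈ filW k q,
      qshL k Θ x y ∈ filW k (p + q)) ∧
    -- … the coproduct respects the filtration, …
    (∀ n : ℕ, ∀ x ∈ filW k (Ω := Ω) n,
      deconcat k x ∈
        (Finset.range (n + 1)).sup fun p =>
          LinearMap.range
            (TensorProduct.map (filW k (Ω := Ω) p).subtype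
              (filW k (Ω := Ω) (n - p)).subtype)) ∧
    -- … and the degree-0 part is spanned by the empty word (connectedness)
    (filW k (Ω := Ω) 0 = Submodule.span k {Finsupp.single [] 1}) ∧
    -- hence a Hopf algebra: there is an antipode
    (∃ S : HW k Ω →ₗ[k] HW k Ω,
      ∀ x : HW k Ω,
        TensorProduct.lift (qshL k Θ) (S.rTensor (HW k Ω) (deconcat k x)) =
          counitW k x • Finsupp.single [] 1 ∧
        TensorProduct.lift (qshL k Θ) (S.lTensor (HW k Ω) (deconcat k x)) =
          counitW k x • Finsupp.single [] 1) := by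
  obtain ⟨S, hl, hr⟩ := exists_antipodeW (k := k) hassoc
  exact ⟨qshL_comm Θ hcomm, qshL_assoc Θ hassoc,
    fun x => ⟨qshL_nil_left Θ x, qshL_nil_right Θ x⟩,
    deconcat_coassoc,
    fun x => ⟨lid_counitW_rTensor_deconcat x, rid_counitW_lTensor_deconcat x⟩,
    deconcat_nil, deconcat_qshL Θ, counitW_nil, counitW_qshL Θ, filW_mono, iSup_filW,
    fun _ _ _ hx _ hy => qshL_mem_filW Θ hx hy,
    fun _ _ hx => deconcat_mem_filW hx, filW_zero,
    S, fun x => ⟨LinearMap.congr_fun hl x, LinearMap.congr_fun hr x⟩⟩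
end
end
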